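/- Completeness of PRK with respect to Kripke semantics: let Γ be a (possibly infinite) set of moded propositions and P a moded proposition; if in every Kripke model for PRK and every world w, (w ⊩ Q for all Q ∈ Γ) implies w ⊩ P, then Γ ⊢ P, i.e., there is a finite subset Δ ⊆ Γ with Δ ⊢ P derivable in PRK. -/

import Mathlib

/-!
Completeness is proved with the canonical model whose worlds are the prime theories
(`PrimeTheory`) ordered by inclusion. If `Γ` does not prove `P`, Lindenbaum's lemma
(`exists_primeTheory`) gives a prime theory containing `Γ` but not `P`, and the truth lemma
(`canonical_forces_iff`) turns it into a world forcing `Γ` but not `P`.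

The crucial point, needed both for the Stabilization condition and for the classical case of the
truth lemma, is that a set `T` inconsistent with `A⁻` proves `A⊕`, and dually
(`SDeriv.cp_of_sn_incons`, `SDeriv.cn_of_sp_incons`). The rule (IC⁺) only yields this when `T` is
inconsistent with the weaker `A⊖`. For compound `A` the stronger form follows from the rules of the
connective. For an atom `α` it holds because replacing every strong atom in a derivation by its
classical counterpart leaves a derivable judgment (`PRK.weakAtom`): a contradiction from `T, α⁻`
becomes one from `T, α⊖`.
-/

/-- Pure propositions: A ::= α | A∧B | A∨B | ¬A -/
inductive PureProp : Type
  | var : ℕ → PureProp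
  | conj : PureProp → PureProp → PureProp
  | disj : PureProp → PureProp → PureProp
  | neg : PureProp → PureProp
  deriving DecidableEq

/-- Moded propositions: A⁺ (sp), A⁻ (sn), A⊕ (cp), A⊖ (cn). -/
inductive MProp : Type
  | sp : PureProp → MProp
  | sn : PureProp → MProp
  | cp : PureProp → MProp
  | cn : PureProp → MProp
  deriving DecidableEq

/-- The opposite P~: flips the sign, keeps the strength. -/
def MProp.opp : MProp → MProp
  | .sp A => .sn A
  | .sn A => .sp A
  | .cp A => .cn A
  | .cn A => .cp A

def MProp.isStrong : MProp → Prop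
  | .sp _ => True
  | .sn _ => True
  | .cp _ => False
  | .cn _ => False

def MProp.isClassical : MProp → Prop
  | .sp _ => False
  | .sn _ => False
  | .cp _ => True
  | .cn _ => True

/-- Derivability in system PRK (natural deduction), Γ a finite set of moded propositions. -/
inductive PRK : Finset MProp → MProp → Prop
  | ax {Γ : Finset MProp} {P : MProp} : P ∈ Γ → PRK Γ P
  | abs {Γ : Finset MProp} {P Q : MProp} :
      P.isStrong → PRK Γ P → PRK Γ P.opp → PRK Γ Q
  | iConjP {Γ A B} : PRK Γ (MProp.cp A) → PRK Γ (MProp.cp B) → PRK Γ (MProp.sp (PureProp.conj A B))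
  | eConjP1 {Γ A B} : PRK Γ (MProp.sp (PureProp.conj A B)) → PRK Γ (MProp.cp A)
  | eConjP2 {Γ A B} : PRK Γ (MProp.sp (PureProp.conj A B)) → PRK Γ (MProp.cp B)
  | iDisjP1 {Γ A B} : PRK Γ (MProp.cp A) → PRK Γ (MProp.sp (PureProp.disj A B))
  | iDisjP2 {Γ A B} : PRK Γ (MProp.cp B) → PRK Γ (MProp.sp (PureProp.disj A B))
  | eDisjP {Γ A B P} : PRK Γ (MProp.sp (PureProp.disj A B)) →
      PRK (insert (MProp.cp A) Γ) P → PRK (insert (MProp.cp B) Γ) P → PRK Γ P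
  | iNegP {Γ A} : PRK Γ (MProp.cn A) → PRK Γ (MProp.sp (PureProp.neg A))
  | eNegP {Γ A} : PRK Γ (MProp.sp (PureProp.neg A)) → PRK Γ (MProp.cn A)
  | icP {Γ A} : PRK (insert (MProp.cn A) Γ) (MProp.sp A) → PRK Γ (MProp.cp A)
  | ecP {Γ A} : PRK Γ (MProp.cp A) → PRK Γ (MProp.cn A) → PRK Γ (MProp.sp A)
  | iDisjN {Γ A B} : PRK Γ (MProp.cn A) → PRK Γ (MProp.cn B) → PRK Γ (MProp.sn (PureProp.disj A B))
  | eDisjN1 {Γ A B} : PRK Γ (MProp.sn (PureProp.disj A B)) → PRK Γ (MProp.cn A)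
  | eDisjN2 {Γ A B} : PRK Γ (MProp.sn (PureProp.disj A B)) → PRK Γ (MProp.cn B)
  | iConjN1 {Γ A B} : PRK Γ (MProp.cn A) → PRK Γ (MProp.sn (PureProp.conj A B))
  | iConjN2 {Γ A B} : PRK Γ (MProp.cn B) → PRK Γ (MProp.sn (PureProp.conj A B))
  | eConjN {Γ A B P} : PRK Γ (MProp.sn (PureProp.conj A B)) →
      PRK (insert (MProp.cn A) Γ) P → PRK (insert (MProp.cn B) Γ) P → PRK Γ P
  | iNegN {Γ A} : PRK Γ (MProp.cp A) → PRK Γ (MProp.sn (PureProp.neg A))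
  | eNegN {Γ A} : PRK Γ (MProp.sn (PureProp.neg A)) → PRK Γ (MProp.cp A)
  | icN {Γ A} : PRK (insert (MProp.cp A) Γ) (MProp.sn A) → PRK Γ (MProp.cn A)
  | ecN {Γ A} : PRK Γ (MProp.cn A) → PRK Γ (MProp.cp A) → PRK Γ (MProp.sn A)

/-- A Kripke model for PRK. -/
structure KripkeModel (W : Type) where
  le : W → W → Prop
  le_refl : ∀ w, le w w
  le_trans : ∀ {a b c}, le a b → le b c → le a c
  le_antisymm : ∀ {a b}, le a b → le b a → a = b
  Vp : W → ℕ → Prop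
  Vn : W → ℕ → Prop
  monoP : ∀ {w w'}, le w w' → ∀ {a}, Vp w a → Vp w' a
  monoN : ∀ {w w'}, le w w' → ∀ {a}, Vn w a → Vn w' a
  stab : ∀ w a, ∃ w', le w w' ∧ Xor' (Vp w' a) (Vn w' a)

def PureProp.size : PureProp → ℕ
  | .var _ => 1
  | .conj A B => 1 + A.size + B.size
  | .disj A B => 1 + A.size + B.size
  | .neg A => 1 + A.size

def MProp.meas : MProp → ℕ
  | .sp A => 2 * A.size
  | .sn A => 2 * A.size
  | .cp A => 2 * A.size + 1
  | .cn A => 2 * A.size + 1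

/-- The forcing relation w ⊩ P, defined by recursion on the measure. -/
def Forces {W : Type} (M : KripkeModel W) : W → MProp → Prop
  | w, .sp (.var a) => M.Vp w a
  | w, .sn (.var a) => M.Vn w a
  | w, .sp (.conj A B) => Forces M w (.cp A) ∧ Forces M w (.cp B)
  | w, .sn (.conj A B) => Forces M w (.cn A) ∨ Forces M w (.cn B)
  | w, .sp (.disj A B) => Forces M w (.cp A) ∨ Forces M w (.cp B)
  | w, .sn (.disj A B) => Forces M w (.cn A) ∧ Forces M w (.cn B)
  | w, .sp (.neg A) => Forces M w (.cn A)
  | w, .sn (.neg A) => Forces M w (.cp A)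
  | w, .cp A => ∀ w', M.le w w' → ¬ Forces M w' (.sn A)
  | w, .cn A => ∀ w', M.le w w' → ¬ Forces M w' (.sp A)
termination_by w P => P.meas
decreasing_by all_goals simp [MProp.meas, PureProp.size] <;> omega

/-- Derivability from a possibly infinite set of moded propositions. -/
def SDeriv (Γ : Set MProp) (P : MProp) : Prop :=
  ∃ Δ : Finset MProp, ↑Δ ⊆ Γ ∧ PRK Δ P

/-- Consistency of a possibly infinite set of moded propositions. -/
def SetConsistent (Γ : Set MProp) : Prop := ∃ P, ¬ SDeriv Γ P

/-! ### Structural properties of derivability -/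

theorem PRK.weaken {Γ Δ : Finset MProp} {P : MProp} (h : PRK Γ P) (hs : Γ ⊆ Δ) : PRK Δ P := by
  induction h generalizing Δ with
  | ax hP => exact .ax (hs hP)
  | abs hP _ _ ih₁ ih₂ => exact .abs hP (ih₁ hs) (ih₂ hs)
  | iConjP _ _ ih₁ ih₂ => exact .iConjP (ih₁ hs) (ih₂ hs)
  | eConjP1 _ ih => exact .eConjP1 (ih hs)
  | eConjP2 _ ih => exact .eConjP2 (ih hs)
  | iDisjP1 _ ih => exact .iDisjP1 (ih hs)
  | iDisjP2 _ ih => exact .iDisjP2 (ih hs)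
  | eDisjP _ _ _ ih₁ ih₂ ih₃ =>
    exact .eDisjP (ih₁ hs) (ih₂ (Finset.insert_subset_insert _ hs))
      (ih₃ (Finset.insert_subset_insert _ hs))
  | iNegP _ ih => exact .iNegP (ih hs)
  | eNegP _ ih => exact .eNegP (ih hs)
  | icP _ ih => exact .icP (ih (Finset.insert_subset_insert _ hs))
  | ecP _ _ ih₁ ih₂ => exact .ecP (ih₁ hs) (ih₂ hs)
  | iDisjN _ _ ih₁ ih₂ => exact .iDisjN (ih₁ hs) (ih₂ hs)
  | eDisjN1 _ ih => exact .eDisjN1 (ih hs)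
  | eDisjN2 _ ih => exact .eDisjN2 (ih hs)
  | iConjN1 _ ih => exact .iConjN1 (ih hs)
  | iConjN2 _ ih => exact .iConjN2 (ih hs)
  | eConjN _ _ _ ih₁ ih₂ ih₃ =>
    exact .eConjN (ih₁ hs) (ih₂ (Finset.insert_subset_insert _ hs))
      (ih₃ (Finset.insert_subset_insert _ hs))
  | iNegN _ ih => exact .iNegN (ih hs)
  | eNegN _ ih => exact .eNegN (ih hs)
  | icN _ ih => exact .icN (ih (Finset.insert_subset_insert _ hs))
  | ecN _ _ ih₁ ih₂ => exact .ecN (ih₁ hs) (ih₂ hs)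

/-- The hypothesis of `PRK.subst` is preserved when both contexts are extended by `Q`. -/
theorem PRK.forall_insert {Γ Δ : Finset MProp} (hs : ∀ R ∈ Γ, PRK Δ R) (Q : MProp) :
    ∀ R ∈ insert Q Γ, PRK (insert Q Δ) R := by
  intro R hR
  rcases Finset.mem_insert.1 hR with rfl | hR
  · exact .ax (Finset.mem_insert_self _ _)
  · exact (hs R hR).weaken (Finset.subset_insert _ _)

/-- Simultaneous cut. -/
theorem PRK.subst {Γ Δ : Finset MProp} {P : MProp} (h : PRK Γ P) (hs : ∀ R ∈ Γ, PRK Δ R) :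
    PRK Δ P := by
  induction h generalizing Δ with
  | ax hP => exact hs _ hP
  | abs hP _ _ ih₁ ih₂ => exact .abs hP (ih₁ hs) (ih₂ hs)
  | iConjP _ _ ih₁ ih₂ => exact .iConjP (ih₁ hs) (ih₂ hs)
  | eConjP1 _ ih => exact .eConjP1 (ih hs)
  | eConjP2 _ ih => exact .eConjP2 (ih hs)
  | iDisjP1 _ ih => exact .iDisjP1 (ih hs)
  | iDisjP2 _ ih => exact .iDisjP2 (ih hs)
  | eDisjP _ _ _ ih₁ ih₂ ih₃ =>
    exact .eDisjP (ih₁ hs) (ih₂ (forall_insert hs _)) (ih₃ (forall_insert hs _))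
  | iNegP _ ih => exact .iNegP (ih hs)
  | eNegP _ ih => exact .eNegP (ih hs)
  | icP _ ih => exact .icP (ih (forall_insert hs _))
  | ecP _ _ ih₁ ih₂ => exact .ecP (ih₁ hs) (ih₂ hs)
  | iDisjN _ _ ih₁ ih₂ => exact .iDisjN (ih₁ hs) (ih₂ hs)
  | eDisjN1 _ ih => exact .eDisjN1 (ih hs)
  | eDisjN2 _ ih => exact .eDisjN2 (ih hs)
  | iConjN1 _ ih => exact .iConjN1 (ih hs)
  | iConjN2 _ ih => exact .iConjN2 (ih hs)
  | eConjN _ _ _ ih₁ ih₂ ih₃ =>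
    exact .eConjN (ih₁ hs) (ih₂ (forall_insert hs _)) (ih₃ (forall_insert hs _))
  | iNegN _ ih => exact .iNegN (ih hs)
  | eNegN _ ih => exact .eNegN (ih hs)
  | icN _ ih => exact .icN (ih (forall_insert hs _))
  | ecN _ _ ih₁ ih₂ => exact .ecN (ih₁ hs) (ih₂ hs)

/-- A strong proposition implies its classical counterpart. -/
theorem PRK.cp_of_sp {Γ : Finset MProp} {A : PureProp} (h : PRK Γ (.sp A)) : PRK Γ (.cp A) :=
  .icP (h.weaken (Finset.subset_insert _ _))

theorem PRK.cn_of_sn {Γ : Finset MProp} {A : PureProp} (h : PRK Γ (.sn A)) : PRK Γ (.cn A) :=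
  .icN (h.weaken (Finset.subset_insert _ _))

/-- Opposite classical propositions prove everything. -/
theorem PRK.absC {Γ : Finset MProp} {A : PureProp} {Q : MProp} (h₁ : PRK Γ (.cp A))
    (h₂ : PRK Γ (.cn A)) : PRK Γ Q :=
  .abs (P := .sp A) trivial (.ecP h₁ h₂) (.ecN h₂ h₁)

/-! ### Weakening strong atoms to classical ones -/

/-- Replaces a strong atom `α⁺`, `α⁻` by the classical `α⊕`, `α⊖` and fixes everything else. -/
def MProp.weakAtom : MProp → MProp
  | .sp (.var a) => .cp (.var a)
  | .sn (.var a) => .cn (.var a)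
  | P => P

theorem PRK.weakAtom_of {Γ : Finset MProp} {P : MProp} (h : PRK Γ P) : PRK Γ P.weakAtom := by
  rcases P with A | A | A | A
  · cases A
    case var => exact h.cp_of_sp
    all_goals exact h
  · cases A
    case var => exact h.cn_of_sn
    all_goals exact h
  · exact h
  · exact h

/-- Derivability survives the weakening of strong atoms: no rule takes a strong atom apart, so
strong atoms enter derivations only through (Abs), (IC) and (EC), and each of these remains
admissible with classical atoms in their place. -/
theorem PRK.weakAtom {Γ : Finset MProp} {P : MProp} (h : PRK Γ P) :
    PRK (Γ.image MProp.weakAtom) P.weakAtom := by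
  induction h with
  | ax hP => exact .ax (Finset.mem_image_of_mem _ hP)
  | @abs Γ P Q hP _ _ ih₁ ih₂ =>
    rcases P with A | A | A | A
    · cases A
      case var => exact absC ih₁ ih₂
      all_goals exact .abs hP ih₁ ih₂
    · cases A
      case var => exact absC ih₂ ih₁
      all_goals exact .abs hP ih₁ ih₂
    · exact hP.elim
    · exact hP.elim
  | iConjP _ _ ih₁ ih₂ => exact .iConjP ih₁ ih₂
  | eConjP1 _ ih => exact .eConjP1 ih
  | eConjP2 _ ih => exact .eConjP2 ih
  | iDisjP1 _ ih => exact .iDisjP1 ih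
  | iDisjP2 _ ih => exact .iDisjP2 ih
  | eDisjP _ _ _ ih₁ ih₂ ih₃ =>
    rw [Finset.image_insert] at ih₂ ih₃
    exact .eDisjP ih₁ ih₂ ih₃
  | iNegP _ ih => exact .iNegP ih
  | eNegP _ ih => exact .eNegP ih
  | @icP Γ A _ ih =>
    rw [Finset.image_insert] at ih
    cases A
    case var => exact .icP (.ecP ih (.ax (Finset.mem_insert_self _ _)))
    all_goals exact .icP ih
  | @ecP Γ A _ _ ih₁ ih₂ =>
    cases A
    case var => exact ih₁
    all_goals exact .ecP ih₁ ih₂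
  | iDisjN _ _ ih₁ ih₂ => exact .iDisjN ih₁ ih₂
  | eDisjN1 _ ih => exact .eDisjN1 ih
  | eDisjN2 _ ih => exact .eDisjN2 ih
  | iConjN1 _ ih => exact .iConjN1 ih
  | iConjN2 _ ih => exact .iConjN2 ih
  | eConjN _ _ _ ih₁ ih₂ ih₃ =>
    rw [Finset.image_insert] at ih₂ ih₃
    exact .eConjN ih₁ ih₂ ih₃
  | iNegN _ ih => exact .iNegN ih
  | eNegN _ ih => exact .eNegN ih
  | @icN Γ A _ ih =>
    rw [Finset.image_insert] at ih
    cases A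
    case var => exact .icN (.ecN ih (.ax (Finset.mem_insert_self _ _)))
    all_goals exact .icN ih
  | @ecN Γ A _ _ ih₁ ih₂ =>
    cases A
    case var => exact ih₁
    all_goals exact .ecN ih₁ ih₂

/-! ### Derivability from infinite sets -/

theorem SDeriv.ax {T : Set MProp} {P : MProp} (h : P ∈ T) : SDeriv T P :=
  ⟨{P}, by simpa using h, .ax (by simp)⟩

theorem SDeriv.of_finset {T : Set MProp} {Δ : Finset MProp} {P : MProp}
    (hs : ∀ R ∈ Δ, SDeriv T R) (h : PRK Δ P) : SDeriv T P := by
  choose! F hF hP using hs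
  refine ⟨Δ.biUnion F, ?_, h.subst fun R hR =>
    (hP R hR).weaken (Finset.subset_biUnion_of_mem F hR)⟩
  intro Q hQ
  obtain ⟨R, hR, hQ⟩ := Finset.mem_biUnion.1 hQ
  exact hF R hR hQ

/-- Simultaneous cut for infinite sets. -/
theorem SDeriv.subst {S T : Set MProp} {P : MProp} (h : SDeriv S P)
    (hs : ∀ R ∈ S, SDeriv T R) : SDeriv T P := by
  obtain ⟨Δ, hΔ, h⟩ := h
  exact of_finset (fun R hR => hs R (hΔ hR)) h

theorem SDeriv.mono {S T : Set MProp} {P : MProp} (h : SDeriv S P) (hs : S ⊆ T) : SDeriv T P :=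
  h.subst fun _ hR => .ax (hs hR)

theorem SDeriv.cut {T : Set MProp} {P Q : MProp} (hP : SDeriv T P)
    (h : SDeriv (insert P T) Q) : SDeriv T Q := by
  refine h.subst ?_
  rintro R (rfl | hR)
  · exact hP
  · exact .ax hR

/-- A derivation may trade the hypothesis `P` for any `P'` that implies it. -/
theorem SDeriv.replace {T : Set MProp} {P P' Q : MProp} (h : SDeriv (insert P T) Q)
    (hP : PRK {P'} P) : SDeriv (insert P' T) Q := by
  refine h.subst ?_
  rintro R (rfl | hR)
  · exact ⟨{P'}, by simp, hP⟩
  · exact .ax (Set.mem_insert_of_mem _ hR)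

theorem SDeriv.exists_insert {T : Set MProp} {P Q : MProp} (h : SDeriv (insert P T) Q) :
    ∃ Δ : Finset MProp, ↑Δ ⊆ T ∧ PRK (insert P Δ) Q := by
  obtain ⟨Δ, hΔ, h⟩ := h
  refine ⟨Δ.erase P, ?_, h.weaken (Finset.insert_erase_subset P Δ)⟩
  intro R hR
  have hR := Finset.mem_erase.1 hR
  exact (hΔ hR.2).resolve_left hR.1

theorem SDeriv.icP {T : Set MProp} {A : PureProp} (h : SDeriv (insert (.cn A) T) (.sp A)) :
    SDeriv T (.cp A) := by
  obtain ⟨Δ, hΔ, h⟩ := h.exists_insert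
  exact ⟨Δ, hΔ, .icP h⟩

theorem SDeriv.icN {T : Set MProp} {A : PureProp} (h : SDeriv (insert (.cp A) T) (.sn A)) :
    SDeriv T (.cn A) := by
  obtain ⟨Δ, hΔ, h⟩ := h.exists_insert
  exact ⟨Δ, hΔ, .icN h⟩

theorem SDeriv.rule₁ {T : Set MProp} {P Q : MProp} (hP : SDeriv T P) (h : PRK {P} Q) :
    SDeriv T Q :=
  of_finset (by simpa using hP) h

theorem SDeriv.rule₂ {T : Set MProp} {P P' Q : MProp} (hP : SDeriv T P) (hP' : SDeriv T P')
    (h : PRK {P, P'} Q) : SDeriv T Q :=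
  of_finset (by simpa using ⟨hP, hP'⟩) h

/-- `(A ∨ B)⊖` implies `A⊖` and `B⊖`, hence the strong refutation `(A ∨ B)⁻`. -/
theorem PRK.sn_disj_of_cn (A B : PureProp) : PRK {.cn (.disj A B)} (.sn (.disj A B)) := by
  refine .iDisjN (.icN (.absC (A := .disj A B) (cp_of_sp (.iDisjP1 (.ax ?_))) (.ax ?_)))
    (.icN (.absC (A := .disj A B) (cp_of_sp (.iDisjP2 (.ax ?_))) (.ax ?_))) <;> simp

theorem PRK.sp_conj_of_cp (A B : PureProp) : PRK {.cp (.conj A B)} (.sp (.conj A B)) := by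
  refine .iConjP (.icP (.absC (A := .conj A B) (.ax ?_) (cn_of_sn (.iConjN1 (.ax ?_)))))
    (.icP (.absC (A := .conj A B) (.ax ?_) (cn_of_sn (.iConjN2 (.ax ?_))))) <;> simp

/-- If `A⁻` is inconsistent with `T`, then `T` proves `A⊕`. The rule (IC⁺) only gives this for
`A⊖` in place of `A⁻`; for an atom the gap is bridged by `PRK.weakAtom`, for a compound `A` by the
introduction rules of its connective. -/
theorem SDeriv.cp_of_sn_incons {T : Set MProp} {A : PureProp}
    (h : ∀ Q, SDeriv (insert (.sn A) T) Q) : SDeriv T (.cp A) := by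
  cases A with
  | var a =>
    obtain ⟨Δ, hΔ, h⟩ := (h (.cp (.var a))).exists_insert
    have h := h.weakAtom
    rw [Finset.image_insert] at h
    have hcp : SDeriv (insert (.cn (.var a)) T) (.cp (.var a)) := by
      refine .of_finset ?_ h
      intro R hR
      rcases Finset.mem_insert.1 hR with rfl | hR
      · exact .ax (Set.mem_insert _ _)
      · obtain ⟨S, hS, rfl⟩ := Finset.mem_image.1 hR
        exact (SDeriv.ax (Set.mem_insert_of_mem _ (hΔ hS))).rule₁ (.weakAtom_of (.ax (by simp)))
    exact .icP (hcp.rule₂ (.ax (Set.mem_insert _ _)) (.ecP (.ax (by simp)) (.ax (by simp))))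
  | conj A B =>
    have hA : SDeriv T (.cp A) := .icP ((h _).replace (.iConjN1 (.ax (by simp))))
    have hB : SDeriv T (.cp B) := .icP ((h _).replace (.iConjN2 (.ax (by simp))))
    exact hA.rule₂ hB (.cp_of_sp (.iConjP (.ax (by simp)) (.ax (by simp))))
  | disj A B => exact .icP ((h _).replace (.sn_disj_of_cn A B))
  | neg A =>
    have hA : SDeriv T (.cn A) := .icN ((h _).replace (.iNegN (.ax (by simp))))
    exact hA.rule₁ (.cp_of_sp (.iNegP (.ax (by simp))))

theorem SDeriv.cn_of_sp_incons {T : Set MProp} {A : PureProp}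
    (h : ∀ Q, SDeriv (insert (.sp A) T) Q) : SDeriv T (.cn A) := by
  cases A with
  | var a =>
    obtain ⟨Δ, hΔ, h⟩ := (h (.cn (.var a))).exists_insert
    have h := h.weakAtom
    rw [Finset.image_insert] at h
    have hcn : SDeriv (insert (.cp (.var a)) T) (.cn (.var a)) := by
      refine .of_finset ?_ h
      intro R hR
      rcases Finset.mem_insert.1 hR with rfl | hR
      · exact .ax (Set.mem_insert _ _)
      · obtain ⟨S, hS, rfl⟩ := Finset.mem_image.1 hR
        exact (SDeriv.ax (Set.mem_insert_of_mem _ (hΔ hS))).rule₁ (.weakAtom_of (.ax (by simp)))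
    exact .icN (hcn.rule₂ (.ax (Set.mem_insert _ _)) (.ecN (.ax (by simp)) (.ax (by simp))))
  | conj A B => exact .icN ((h _).replace (.sp_conj_of_cp A B))
  | disj A B =>
    have hA : SDeriv T (.cn A) := .icN ((h _).replace (.iDisjP1 (.ax (by simp))))
    have hB : SDeriv T (.cn B) := .icN ((h _).replace (.iDisjP2 (.ax (by simp))))
    exact hA.rule₂ hB (.cn_of_sn (.iDisjN (.ax (by simp)) (.ax (by simp))))
  | neg A =>
    have hA : SDeriv T (.cp A) := .icP ((h _).replace (.iNegP (.ax (by simp))))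
    exact hA.rule₁ (.cn_of_sn (.iNegN (.ax (by simp))))

/-! ### Prime theories -/

/-- A prime theory: a consistent, deductively closed set of moded propositions that contains an
immediate reason for each strong disjunction `(A ∨ B)⁺` or `(A ∧ B)⁻` in it. -/
structure PrimeTheory (T : Set MProp) : Prop where
  closed : ∀ P, SDeriv T P → P ∈ T
  consistent : SetConsistent T
  disjP : ∀ A B, .sp (.disj A B) ∈ T → .cp A ∈ T ∨ .cp B ∈ T
  conjN : ∀ A B, .sn (.conj A B) ∈ T → .cn A ∈ T ∨ .cn B ∈ T

theorem PrimeTheory.rule₁ {T : Set MProp} (hT : PrimeTheory T) {P Q : MProp} (hP : P ∈ T)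
    (h : PRK {P} Q) : Q ∈ T :=
  hT.closed _ ((SDeriv.ax hP).rule₁ h)

theorem PrimeTheory.rule₂ {T : Set MProp} (hT : PrimeTheory T) {P P' Q : MProp} (hP : P ∈ T)
    (hP' : P' ∈ T) (h : PRK {P, P'} Q) : Q ∈ T :=
  hT.closed _ ((SDeriv.ax hP).rule₂ (.ax hP') h)

theorem PrimeTheory.not_cp_cn {T : Set MProp} (hT : PrimeTheory T) {A : PureProp}
    (h₁ : .cp A ∈ T) (h₂ : .cn A ∈ T) : False := by
  obtain ⟨Q, hQ⟩ := hT.consistent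
  exact hQ ((SDeriv.ax h₁).rule₂ (.ax h₂) (.absC (A := A) (.ax (by simp)) (.ax (by simp))))

theorem PrimeTheory.cp_of_sp {T : Set MProp} (hT : PrimeTheory T) {A : PureProp}
    (h : .sp A ∈ T) : .cp A ∈ T :=
  hT.rule₁ h (.cp_of_sp (.ax (by simp)))

theorem PrimeTheory.cn_of_sn {T : Set MProp} (hT : PrimeTheory T) {A : PureProp}
    (h : .sn A ∈ T) : .cn A ∈ T :=
  hT.rule₁ h (.cn_of_sn (.ax (by simp)))

/-- Lindenbaum's lemma: by Zorn, a set not proving `Q` extends to a maximal such set, which is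
prime. -/
theorem exists_primeTheory {Γ : Set MProp} {Q : MProp} (h : ¬ SDeriv Γ Q) :
    ∃ T, PrimeTheory T ∧ Γ ⊆ T ∧ Q ∉ T := by
  obtain ⟨T, hΓT, hT⟩ := zorn_subset_nonempty {S : Set MProp | ¬ SDeriv S Q} (by
    intro c hc hchain hne
    refine ⟨⋃₀ c, ?_, fun S hS => Set.subset_sUnion_of_mem hS⟩
    rintro ⟨Δ, hΔ, hd⟩
    obtain ⟨S, hS, hΔS⟩ := hchain.directedOn.exists_mem_subset_of_finset_subset_biUnion
      (f := id) hne (s := Δ) (by simpa [Set.sUnion_eq_biUnion] using hΔ)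
    exact hc hS ⟨Δ, hΔS, hd⟩) Γ h
  have hTQ : ¬ SDeriv T Q := hT.prop
  have key : ∀ P, P ∉ T → SDeriv (insert P T) Q := by
    intro P hP
    by_contra hcon
    exact hP (hT.le_of_ge hcon (Set.subset_insert P T) (Set.mem_insert P T))
  refine ⟨T, ⟨?_, ⟨Q, hTQ⟩, ?_, ?_⟩, hΓT, fun hQ => hTQ (.ax hQ)⟩
  · intro P hP
    by_contra hn
    exact hTQ (hP.cut (key P hn))
  · intro A B hAB
    by_contra! hn
    obtain ⟨Δ₁, h₁, d₁⟩ := (key _ hn.1).exists_insert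
    obtain ⟨Δ₂, h₂, d₂⟩ := (key _ hn.2).exists_insert
    refine hTQ (.of_finset (Δ := insert (.sp (.disj A B)) (Δ₁ ∪ Δ₂)) ?_
      (.eDisjP (.ax (Finset.mem_insert_self _ _)) (d₁.weaken ?_) (d₂.weaken ?_)))
    · intro R hR
      simp only [Finset.mem_insert, Finset.mem_union] at hR
      rcases hR with rfl | hR | hR
      exacts [.ax hAB, .ax (h₁ hR), .ax (h₂ hR)]
    all_goals intro R; simp only [Finset.mem_insert, Finset.mem_union]; tauto
  · intro A B hAB
    by_contra! hn
    obtain ⟨Δ₁, h₁, d₁⟩ := (key _ hn.1).exists_insert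
    obtain ⟨Δ₂, h₂, d₂⟩ := (key _ hn.2).exists_insert
    refine hTQ (.of_finset (Δ := insert (.sn (.conj A B)) (Δ₁ ∪ Δ₂)) ?_
      (.eConjN (.ax (Finset.mem_insert_self _ _)) (d₁.weaken ?_) (d₂.weaken ?_)))
    · intro R hR
      simp only [Finset.mem_insert, Finset.mem_union] at hR
      rcases hR with rfl | hR | hR
      exacts [.ax hAB, .ax (h₁ hR), .ax (h₂ hR)]
    all_goals intro R; simp only [Finset.mem_insert, Finset.mem_union]; tauto

theorem PrimeTheory.exists_sn {T : Set MProp} (hT : PrimeTheory T) {A : PureProp}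
    (h : .cp A ∉ T) : ∃ T', PrimeTheory T' ∧ T ⊆ T' ∧ .sn A ∈ T' := by
  by_contra! hn
  refine h (hT.closed _ (.cp_of_sn_incons fun Q => ?_))
  by_contra hQ
  obtain ⟨T', hT', hs, -⟩ := exists_primeTheory hQ
  exact hn T' hT' ((Set.subset_insert _ _).trans hs) (hs (Set.mem_insert _ _))

theorem PrimeTheory.exists_sp {T : Set MProp} (hT : PrimeTheory T) {A : PureProp}
    (h : .cn A ∉ T) : ∃ T', PrimeTheory T' ∧ T ⊆ T' ∧ .sp A ∈ T' := by
  by_contra! hn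
  refine h (hT.closed _ (.cn_of_sp_incons fun Q => ?_))
  by_contra hQ
  obtain ⟨T', hT', hs, -⟩ := exists_primeTheory hQ
  exact hn T' hT' ((Set.subset_insert _ _).trans hs) (hs (Set.mem_insert _ _))

/-! ### The canonical model -/

/-- The canonical model: worlds are the prime theories ordered by inclusion, and a world verifies
or falsifies the atoms `α` for which it contains `α⁺` or `α⁻`. -/
def canonicalModel : KripkeModel {T : Set MProp // PrimeTheory T} where
  le T T' := T.1 ⊆ T'.1
  le_refl _ := subset_rfl
  le_trans := fun h₁ h₂ => h₁.trans h₂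
  le_antisymm := fun h₁ h₂ => Subtype.ext (h₁.antisymm h₂)
  Vp T a := .sp (.var a) ∈ T.1
  Vn T a := .sn (.var a) ∈ T.1
  monoP := fun h _ ha => h ha
  monoN := fun h _ ha => h ha
  stab := by
    rintro ⟨T, hT⟩ a
    -- A consistent `T` lacks one of `α⊕`, `α⊖`, so one of `α⁻`, `α⁺` can be added to it.
    by_cases hcp : .cp (.var a) ∈ T
    · obtain ⟨T', hT', hs, h⟩ := hT.exists_sp fun hcn => hT.not_cp_cn hcp hcn
      exact ⟨⟨T', hT'⟩, hs, .inl ⟨h, fun h' => hT'.not_cp_cn (hT'.cp_of_sp h) (hT'.cn_of_sn h')⟩⟩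
    · obtain ⟨T', hT', hs, h⟩ := hT.exists_sn hcp
      exact ⟨⟨T', hT'⟩, hs, .inr ⟨h, fun h' => hT'.not_cp_cn (hT'.cp_of_sp h') (hT'.cn_of_sn h)⟩⟩

theorem canonical_cp {A : PureProp}
    (ih : ∀ w, Forces canonicalModel w (.sn A) ↔ .sn A ∈ w.1) (w) :
    Forces canonicalModel w (.cp A) ↔ .cp A ∈ w.1 := by
  rw [Forces]
  constructor
  · intro h
    by_contra hn
    obtain ⟨T', hT', hs, hA⟩ := w.2.exists_sn hn
    exact h ⟨T', hT'⟩ hs ((ih _).2 hA)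
  · intro h w' hw hA
    exact w'.2.not_cp_cn (hw h) (w'.2.cn_of_sn ((ih _).1 hA))

theorem canonical_cn {A : PureProp}
    (ih : ∀ w, Forces canonicalModel w (.sp A) ↔ .sp A ∈ w.1) (w) :
    Forces canonicalModel w (.cn A) ↔ .cn A ∈ w.1 := by
  rw [Forces]
  constructor
  · intro h
    by_contra hn
    obtain ⟨T', hT', hs, hA⟩ := w.2.exists_sp hn
    exact h ⟨T', hT'⟩ hs ((ih _).2 hA)
  · intro h w' hw hA
    exact w'.2.not_cp_cn (w'.2.cp_of_sp ((ih _).1 hA)) (hw h)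

theorem canonical_strong (A : PureProp) :
    (∀ w, Forces canonicalModel w (.sp A) ↔ .sp A ∈ w.1) ∧
      ∀ w, Forces canonicalModel w (.sn A) ↔ .sn A ∈ w.1 := by
  induction A with
  | var a => exact ⟨fun w => by rw [Forces]; rfl, fun w => by rw [Forces]; rfl⟩
  | conj A B ihA ihB =>
    constructor <;> intro w
    · rw [Forces, canonical_cp ihA.2, canonical_cp ihB.2]
      exact ⟨fun h => w.2.rule₂ h.1 h.2 (.iConjP (.ax (by simp)) (.ax (by simp))),
        fun h => ⟨w.2.rule₁ h (.eConjP1 (.ax (Finset.mem_singleton_self _))),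
          w.2.rule₁ h (.eConjP2 (.ax (Finset.mem_singleton_self _)))⟩⟩
    · rw [Forces, canonical_cn ihA.1, canonical_cn ihB.1]
      refine ⟨?_, w.2.conjN A B⟩
      rintro (h | h)
      · exact w.2.rule₁ h (.iConjN1 (.ax (by simp)))
      · exact w.2.rule₁ h (.iConjN2 (.ax (by simp)))
  | disj A B ihA ihB =>
    constructor <;> intro w
    · rw [Forces, canonical_cp ihA.2, canonical_cp ihB.2]
      refine ⟨?_, w.2.disjP A B⟩
      rintro (h | h)
      · exact w.2.rule₁ h (.iDisjP1 (.ax (by simp)))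
      · exact w.2.rule₁ h (.iDisjP2 (.ax (by simp)))
    · rw [Forces, canonical_cn ihA.1, canonical_cn ihB.1]
      exact ⟨fun h => w.2.rule₂ h.1 h.2 (.iDisjN (.ax (by simp)) (.ax (by simp))),
        fun h => ⟨w.2.rule₁ h (.eDisjN1 (.ax (Finset.mem_singleton_self _))),
          w.2.rule₁ h (.eDisjN2 (.ax (Finset.mem_singleton_self _)))⟩⟩
  | neg A ihA =>
    constructor <;> intro w
    · rw [Forces, canonical_cn ihA.1]
      exact ⟨fun h => w.2.rule₁ h (.iNegP (.ax (by simp))),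
        fun h => w.2.rule₁ h (.eNegP (.ax (by simp)))⟩
    · rw [Forces, canonical_cp ihA.2]
      exact ⟨fun h => w.2.rule₁ h (.iNegN (.ax (by simp))),
        fun h => w.2.rule₁ h (.eNegN (.ax (by simp)))⟩

/-- Truth lemma: a world of the canonical model forces exactly its members. -/
theorem canonical_forces_iff (P : MProp) (w) : Forces canonicalModel w P ↔ P ∈ w.1 := by
  cases P with
  | sp A => exact (canonical_strong A).1 w
  | sn A => exact (canonical_strong A).2 w
  | cp A => exact canonical_cp (canonical_strong A).2 w
  | cn A => exact canonical_cn (canonical_strong A).1 w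

/-- Completeness of PRK with respect to Kripke semantics. -/
theorem prk_completeness (Γ : Set MProp) (P : MProp)
    (h : ∀ (W : Type) (M : KripkeModel W) (w : W),
      (∀ Q ∈ Γ, Forces M w Q) → Forces M w P) :
    SDeriv Γ P := by
  by_contra hn
  obtain ⟨T, hT, hΓ, hP⟩ := exists_primeTheory hn
  refine hP ((canonical_forces_iff P ⟨T, hT⟩).1 (h _ canonicalModel ⟨T, hT⟩ fun Q hQ => ?_))
  exact (canonical_forces_iff Q ⟨T, hT⟩).2 (hΓ hQ)
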